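/- Let 𝕜 be a field of characteristic zero, V a finite-dimensional 𝕜-vector space, and ν a nondegenerate alternating bilinear form on V. Let P be the space of all linear maps T : V → End(V) such that T(x)y = T(y)x for all x, y ∈ V and T(x) ∈ 𝔰𝔭(ν) for every x ∈ V (the first prolongation of 𝔰𝔭(ν)). Then the map T ↦ c, where c(x,y,z) := ν(T(x)y, z), is a linear isomorphism from P onto the space of totally symmetric trilinear forms on V. (That is, 𝔰𝔭(ν)^{(1)} ≅ ⊙³V*.) -/

import Mathlib

/-- The first prolongation `𝔰𝔭(ν)^{(1)}` of `𝔰𝔭(ν) ⊆ End(V)`: linear maps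
`T : V → End(V)` with `T(x)y = T(y)x` and `T(x) ∈ 𝔰𝔭(ν)` for all `x`. -/
def prolongSp (𝕜 : Type*) [Field 𝕜] (V : Type*) [AddCommGroup V] [Module 𝕜 V]
    (ν : V →ₗ[𝕜] V →ₗ[𝕜] 𝕜) : Submodule 𝕜 (V →ₗ[𝕜] Module.End 𝕜 V) where
  carrier := {T | (∀ x y, T x y = T y x) ∧ ∀ x u v, ν (T x u) v + ν u (T x v) = 0}
  zero_mem' := by simp
  add_mem' := by
    rintro T T' ⟨h1, h2⟩ ⟨h1', h2'⟩
    refine ⟨fun x y => ?_, fun x u v => ?_⟩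
    · simp [h1 x y, h1' x y]
    · simp only [LinearMap.add_apply, map_add]
      linear_combination h2 x u v + h2' x u v
  smul_mem' := by
    rintro c T ⟨h1, h2⟩
    refine ⟨fun x y => ?_, fun x u v => ?_⟩
    · simp [h1 x y]
    · simp only [LinearMap.smul_apply, map_smul, smul_eq_mul]
      linear_combination c * h2 x u v

/-- The space of totally symmetric trilinear forms `⊙³V*` on `V`. -/
def symTrilinear (𝕜 : Type*) [Field 𝕜] (V : Type*) [AddCommGroup V] [Module 𝕜 V] :
    Submodule 𝕜 (V →ₗ[𝕜] V →ₗ[𝕜] V →ₗ[𝕜] 𝕜) where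
  carrier := {c | (∀ x y z, c x y z = c y x z) ∧ ∀ x y z, c x y z = c x z y}
  zero_mem' := by simp
  add_mem' := by
    rintro c c' ⟨h1, h2⟩ ⟨h1', h2'⟩
    exact ⟨fun x y z => by simp [h1 x y z, h1' x y z],
           fun x y z => by simp [h2 x y z, h2' x y z]⟩
  smul_mem' := by
    rintro a c ⟨h1, h2⟩
    exact ⟨fun x y z => by simp [h1 x y z], fun x y z => by simp [h2 x y z]⟩

/-- For a nondegenerate alternating bilinear form `ν` on a finite-dimensional
vector space `V` over a field of characteristic zero, the map `T ↦ c` with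
`c(x,y,z) = ν(T(x)y, z)` is a linear isomorphism from the first prolongation
`𝔰𝔭(ν)^{(1)}` onto the space of totally symmetric trilinear forms on `V`:
`𝔰𝔭(ν)^{(1)} ≅ ⊙³V*`. -/
theorem stmt_7 (𝕜 : Type*) [Field 𝕜] [CharZero 𝕜]
    (V : Type*) [AddCommGroup V] [Module 𝕜 V] [FiniteDimensional 𝕜 V]
    (ν : V →ₗ[𝕜] V →ₗ[𝕜] 𝕜)
    (halt : ∀ x, ν x x = 0)
    (hnd : ∀ x, (∀ y, ν x y = 0) → x = 0) :
    ∃ e : prolongSp 𝕜 V ν ≃ₗ[𝕜] symTrilinear 𝕜 V,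
      ∀ (T : prolongSp 𝕜 V ν) (x y z : V),
        (↑(e T) : V →ₗ[𝕜] V →ₗ[𝕜] V →ₗ[𝕜] 𝕜) x y z =
          ν ((↑T : V →ₗ[𝕜] Module.End 𝕜 V) x y) z := by
  have hanti : ∀ x y, ν x y = - ν y x := by
    intro x y
    have h := halt (x + y)
    simp only [map_add, LinearMap.add_apply, halt] at h
    linear_combination h
  have hinj : Function.Injective ν := by
    rw [injective_iff_map_eq_zero]
    intro x hx
    exact hnd x fun y => by simp [hx]
  let N : V ≃ₗ[𝕜] (V →ₗ[𝕜] 𝕜) :=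
    LinearEquiv.ofInjectiveOfFinrankEq ν hinj (Subspace.dual_finrank_eq).symm
  have hN : ∀ x y, N x y = ν x y := fun x y => rfl
  let E : (V →ₗ[𝕜] V →ₗ[𝕜] V) ≃ₗ[𝕜] (V →ₗ[𝕜] V →ₗ[𝕜] V →ₗ[𝕜] 𝕜) :=
    LinearEquiv.congrRight (LinearEquiv.congrRight N)
  have hE : ∀ T x y z, E T x y z = ν (T x y) z := fun T x y z => rfl
  have hmem : ∀ T : V →ₗ[𝕜] V →ₗ[𝕜] V, T ∈ prolongSp 𝕜 V ν ↔ E T ∈ symTrilinear 𝕜 V := by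
    intro T
    constructor
    · rintro ⟨h1, h2⟩
      refine ⟨fun x y z => ?_, fun x y z => ?_⟩
      · rw [hE, hE, h1 x y]
      · rw [hE, hE]
        linear_combination h2 x y z - hanti y (T x z)
    · rintro ⟨h1, h2⟩
      refine ⟨fun x y => ?_, fun x u v => ?_⟩
      · apply hinj
        ext z
        exact h1 x y z
      · have h := h2 x u v
        rw [hE, hE] at h
        linear_combination h + hanti u (T x v)
  refine ⟨LinearEquiv.ofSubmodules E (prolongSp 𝕜 V ν) (symTrilinear 𝕜 V) ?_, ?_⟩
  · ext c
    constructor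
    · rintro ⟨T, hT, rfl⟩
      exact (hmem T).1 hT
    · intro hc
      refine ⟨E.symm c, (hmem _).2 ?_, E.apply_symm_apply c⟩
      rw [E.apply_symm_apply]
      exact hc
  · intro T x y z
    rfl
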